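/- Let n ≥ 2 and let α, β ∈ UVP_n. If there exists a permutation π ∈ S_n such that s(π) α s(π)^{−1} and β lie in the same coset of the commutator subgroup [UVP_n, UVP_n] of UVP_n (i.e., s(π) α s(π)^{−1} β^{−1} ∈ [UVP_n, UVP_n]), then α and β are fused Markov equivalent. -/

import Mathlib

/-!  Common setup: the unrestricted virtual braid group `UVB n`, its generators
σ_k, ρ_k (1-based indices), the elements λ_{i,j} and B_{i,j}, the permutation
homomorphism ι (characterized by `IsIota`), the section s : S_n → UVB n
(characterized by `IsPermSection`), and fused Markov equivalence. -/

/-- Generators of the unrestricted virtual braid group `UVB n`: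
`Sum.inl i` is the classical generator σ_{i+1} and `Sum.inr i` is the virtual
generator ρ_{i+1}, for `i : Fin (n-1)` (so the 1-based indices are `1, …, n-1`). -/
abbrev UVBGen (n : ℕ) := Sum (Fin (n - 1)) (Fin (n - 1))

namespace UVBGen
def sg {n : ℕ} (i : Fin (n - 1)) : FreeGroup (UVBGen n) := FreeGroup.of (Sum.inl i)
def rg {n : ℕ} (i : Fin (n - 1)) : FreeGroup (UVBGen n) := FreeGroup.of (Sum.inr i)
end UVBGen

open UVBGen in
/-- The defining relations of the unrestricted virtual braid group. -/
def uvbRels (n : ℕ) : Set (FreeGroup (UVBGen n)) :=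
  {r | (∃ i j : Fin (n - 1), (j : ℕ) = (i : ℕ) + 1 ∧
          (r = sg i * sg j * sg i * (sg j * sg i * sg j)⁻¹ ∨
           r = rg i * rg j * rg i * (rg j * rg i * rg j)⁻¹ ∨
           r = rg i * rg j * sg i * (sg j * rg i * rg j)⁻¹ ∨
           r = rg i * sg j * sg i * (sg j * sg i * rg j)⁻¹ ∨
           r = rg j * sg i * sg j * (sg i * sg j * rg i)⁻¹)) ∨
       (∃ i j : Fin (n - 1), ((i : ℕ) + 2 ≤ (j : ℕ) ∨ (j : ℕ) + 2 ≤ (i : ℕ)) ∧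
          (r = sg i * sg j * (sg j * sg i)⁻¹ ∨
           r = rg i * rg j * (rg j * rg i)⁻¹ ∨
           r = sg i * rg j * (rg j * sg i)⁻¹)) ∨
       (∃ i : Fin (n - 1), r = rg i * rg i)}

/-- The unrestricted virtual braid group on `n` strands. -/
abbrev UVB (n : ℕ) := PresentedGroup (uvbRels n)

namespace UVB

/-- The generator σ_k (1-based index; meaningful for `1 ≤ k ≤ n-1`, junk value `1` otherwise). -/
def sigma (n k : ℕ) : UVB n :=
  if h : 1 ≤ k ∧ k ≤ n - 1 then PresentedGroup.of (Sum.inl ⟨k - 1, by omega⟩) else 1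

/-- The generator ρ_k (1-based index; meaningful for `1 ≤ k ≤ n-1`, junk value `1` otherwise). -/
def rho (n k : ℕ) : UVB n :=
  if h : 1 ≤ k ∧ k ≤ n - 1 then PresentedGroup.of (Sum.inr ⟨k - 1, by omega⟩) else 1

/-- The element λ_{i,j} of `UVB n` (1-based indices `1 ≤ i ≠ j ≤ n`; junk value `1` if `i = j`).
For `i < j`:  `λ_{i,j} = ρ_{j-1}⋯ρ_{i+1} · ρ_i σ_i⁻¹ · ρ_{i+1}⋯ρ_{j-1}` and
`λ_{j,i} = ρ_{j-1}⋯ρ_{i+1} · σ_i⁻¹ ρ_i · ρ_{i+1}⋯ρ_{j-1}`. -/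
def lam (n i j : ℕ) : UVB n :=
  if i < j then
    (((List.range' (i + 1) (j - 1 - i)).reverse.map (rho n)).prod) *
      (rho n i * (sigma n i)⁻¹) *
      (((List.range' (i + 1) (j - 1 - i)).map (rho n)).prod)
  else if j < i then
    (((List.range' (j + 1) (i - 1 - j)).reverse.map (rho n)).prod) *
      ((sigma n j)⁻¹ * rho n j) *
      (((List.range' (j + 1) (i - 1 - j)).map (rho n)).prod)
  else 1

/-- The element `B_{i,j} = ρ_{j-1}ρ_{j-2}⋯ρ_{i+1}ρ_i` for `i < j`, and `1` otherwise. -/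
def B (n i j : ℕ) : UVB n :=
  if i < j then ((List.range' i (j - i)).reverse.map (rho n)).prod else 1

/-- The subgroup `U_j` of `UVB n` generated by `{λ_{i,j}, λ_{j,i} : 1 ≤ i < j}`. -/
def U (n j : ℕ) : Subgroup (UVB n) :=
  Subgroup.closure {x | ∃ i, 1 ≤ i ∧ i < j ∧ (x = lam n i j ∨ x = lam n j i)}

end UVB

/-- `ι : UVB n →* S_n` is the homomorphism sending σ_k and ρ_k to the
transposition (k, k+1) (written 0-based on `Fin n`). -/
def IsIota (n : ℕ) (ι : UVB n →* Equiv.Perm (Fin n)) : Prop :=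
  ∀ (k : ℕ) (h1 : 1 ≤ k) (h2 : k ≤ n - 1),
    ι (UVB.sigma n k) = Equiv.swap ⟨k - 1, by omega⟩ ⟨k, by omega⟩ ∧
    ι (UVB.rho n k) = Equiv.swap ⟨k - 1, by omega⟩ ⟨k, by omega⟩

/-- `s : S_n →* UVB n` is the homomorphism sending the transposition (k, k+1) to ρ_k. -/
def IsPermSection (n : ℕ) (s : Equiv.Perm (Fin n) →* UVB n) : Prop :=
  ∀ (k : ℕ) (h1 : 1 ≤ k) (h2 : k ≤ n - 1),
    s (Equiv.swap ⟨k - 1, by omega⟩ ⟨k, by omega⟩) = UVB.rho n k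

/-- The number of orbits of a permutation of `Fin n`
(= number of fixed points + number of nontrivial cycles). -/
def numOrbits {n : ℕ} (π : Equiv.Perm (Fin n)) : ℕ :=
  (Finset.univ.filter fun x => π x = x).card + π.cycleType.card

namespace UVB

private def embedGen (n : ℕ) : UVBGen n → UVBGen (n + 1)
  | Sum.inl i => Sum.inl ⟨i.val, by have := i.isLt; omega⟩
  | Sum.inr i => Sum.inr ⟨i.val, by have := i.isLt; omega⟩

open UVBGen in
/-- The natural inclusion `UVB n →* UVB (n+1)` (σ_k ↦ σ_k, ρ_k ↦ ρ_k). -/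
def incl (n : ℕ) : UVB n →* UVB (n + 1) :=
  PresentedGroup.toGroup (f := fun x => PresentedGroup.of (embedGen n x)) (by
    have key : (FreeGroup.lift fun x => (PresentedGroup.of (embedGen n x) : UVB (n + 1)))
        = (PresentedGroup.mk (uvbRels (n + 1))).comp (FreeGroup.map (embedGen n)) := by
      ext x
      simp [PresentedGroup.of]
    intro r hr
    rw [key]
    simp only [MonoidHom.comp_apply]
    have hmem : FreeGroup.map (embedGen n) r ∈ uvbRels (n + 1) := by
      have hsg : ∀ i : Fin (n - 1), FreeGroup.map (embedGen n) (sg i)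
          = sg (⟨i.val, by have := i.isLt; omega⟩ : Fin (n + 1 - 1)) := by
        intro i; simp [sg, embedGen]
      have hrg : ∀ i : Fin (n - 1), FreeGroup.map (embedGen n) (rg i)
          = rg (⟨i.val, by have := i.isLt; omega⟩ : Fin (n + 1 - 1)) := by
        intro i; simp [rg, embedGen]
      rcases hr with ⟨i, j, hij, hc⟩ | ⟨i, j, hij, hc⟩ | ⟨i, hc⟩
      · refine Or.inl ⟨⟨i.val, by have := i.isLt; omega⟩, ⟨j.val, by have := j.isLt; omega⟩,
          by simpa using hij, ?_⟩
        rcases hc with h | h | h | h | h <;> subst h <;>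
          simp only [map_mul, map_inv, hsg, hrg] <;> tauto
      · refine Or.inr (Or.inl ⟨⟨i.val, by have := i.isLt; omega⟩, ⟨j.val, by have := j.isLt; omega⟩,
          by simpa using hij, ?_⟩)
        rcases hc with h | h | h <;> subst h <;>
          simp only [map_mul, map_inv, hsg, hrg] <;> tauto
      · refine Or.inr (Or.inr ⟨⟨i.val, by have := i.isLt; omega⟩, ?_⟩)
        subst hc
        simp only [map_mul, hsg, hrg]
    exact (QuotientGroup.eq_one_iff _).mpr (Subgroup.subset_normalClosure hmem))

end UVB

/-- The elementary fused Markov moves on the disjoint union of the groups `UVB n`: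
conjugation, and the three right stabilizations (positive, negative, virtual). -/
inductive MarkovBase : (Σ n, UVB n) → (Σ n, UVB n) → Prop
  | conj (n : ℕ) (α γ : UVB n) : MarkovBase ⟨n, α⟩ ⟨n, γ * α * γ⁻¹⟩
  | stabPos (n : ℕ) (α : UVB n) :
      MarkovBase ⟨n, α⟩ ⟨n + 1, UVB.incl n α * UVB.sigma (n + 1) n⟩
  | stabNeg (n : ℕ) (α : UVB n) :
      MarkovBase ⟨n, α⟩ ⟨n + 1, UVB.incl n α * (UVB.sigma (n + 1) n)⁻¹⟩
  | stabVirt (n : ℕ) (α : UVB n) :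
      MarkovBase ⟨n, α⟩ ⟨n + 1, UVB.incl n α * UVB.rho (n + 1) n⟩

/-- Fused Markov equivalence: the smallest equivalence relation generated by the
elementary Markov moves.  By Kamada's theorem, two unrestricted virtual braids are
fused Markov equivalent iff their closures are equivalent fused links. -/
def Markov : (Σ n, UVB n) → (Σ n, UVB n) → Prop := Relation.EqvGen MarkovBase

/-!
The pure group is generated by the `λ_{i,j}`, and any two of them commute except `λ_{i,j}` and
`λ_{j,i}`.  Write a pure braid as `w z β`, where `w` and `z` are words in these last two, with
`i = n - 1` and `j = n`, and `β` commutes with both.  Since `z` and `β` commute, two virtual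
stabilizations can be carried out so that `z` is moved off strand `n`, onto strands `n - 1` and
`n + 1`, where it commutes with `λ_{n-1,n}`.  Conjugating by `λ_{n+2,n+1} λ_{n-1,n}` then carries
the factor `λ_{n-1,n}` from one side of `λ_{n,n-1}` to the other: the permutation braid produced by
the stabilizations reverses the last four strands, hence exchanges the two factors of the
conjugator.  So `λ_{n-1,n}` and `λ_{n,n-1}` may be exchanged within the Markov class, and
conjugating by permutation braids gives the same for every `λ_{i,j}` and `λ_{j,i}`.  The pure braids
that can be inserted in front of every pure braid form a normal subgroup, which therefore contains
the commutator subgroup.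
-/

namespace UVB

variable {n : ℕ}

section Relations

lemma sigma_eq_mk {k : ℕ} (hk : 1 ≤ k) (hkn : k < n) :
    sigma n k = PresentedGroup.mk (uvbRels n) (UVBGen.sg ⟨k - 1, by omega⟩) :=
  dif_pos ⟨hk, by omega⟩

lemma rho_eq_mk {k : ℕ} (hk : 1 ≤ k) (hkn : k < n) :
    rho n k = PresentedGroup.mk (uvbRels n) (UVBGen.rg ⟨k - 1, by omega⟩) :=
  dif_pos ⟨hk, by omega⟩

lemma sigma_eq_one {k : ℕ} (hk : ¬(1 ≤ k ∧ k < n)) : sigma n k = 1 :=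
  dif_neg (by omega)

lemma rho_eq_one {k : ℕ} (hk : ¬(1 ≤ k ∧ k < n)) : rho n k = 1 :=
  dif_neg (by omega)

lemma rho_mul_self (k : ℕ) : rho n k * rho n k = 1 := by
  by_cases hk : 1 ≤ k ∧ k < n
  · rw [rho_eq_mk hk.1 hk.2, ← map_mul]
    exact PresentedGroup.one_of_mem (Or.inr (Or.inr ⟨_, rfl⟩))
  · rw [rho_eq_one hk, one_mul]

lemma rho_mul_cancel_left (k : ℕ) (x : UVB n) : rho n k * (rho n k * x) = x := by
  rw [← mul_assoc, rho_mul_self, one_mul]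

@[simp]
lemma rho_inv (k : ℕ) : (rho n k)⁻¹ = rho n k :=
  inv_eq_of_mul_eq_one_right (rho_mul_self k)

lemma commute_sigma_sigma {k l : ℕ} (h : k + 2 ≤ l ∨ l + 2 ≤ k) :
    Commute (sigma n k) (sigma n l) := by
  by_cases hk : 1 ≤ k ∧ k < n
  · by_cases hl : 1 ≤ l ∧ l < n
    · rw [sigma_eq_mk hk.1 hk.2, sigma_eq_mk hl.1 hl.2]
      exact PresentedGroup.mk_eq_mk_of_mul_inv_mem
        (Or.inr (Or.inl ⟨_, _, by dsimp only; omega, Or.inl rfl⟩))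
    · exact sigma_eq_one hl ▸ Commute.one_right _
  · exact sigma_eq_one hk ▸ Commute.one_left _

lemma commute_rho_rho {k l : ℕ} (h : k + 2 ≤ l ∨ l + 2 ≤ k) :
    Commute (rho n k) (rho n l) := by
  by_cases hk : 1 ≤ k ∧ k < n
  · by_cases hl : 1 ≤ l ∧ l < n
    · rw [rho_eq_mk hk.1 hk.2, rho_eq_mk hl.1 hl.2]
      exact PresentedGroup.mk_eq_mk_of_mul_inv_mem
        (Or.inr (Or.inl ⟨_, _, by dsimp only; omega, Or.inr (Or.inl rfl)⟩))
    · exact rho_eq_one hl ▸ Commute.one_right _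
  · exact rho_eq_one hk ▸ Commute.one_left _

lemma commute_sigma_rho {k l : ℕ} (h : k + 2 ≤ l ∨ l + 2 ≤ k) :
    Commute (sigma n k) (rho n l) := by
  by_cases hk : 1 ≤ k ∧ k < n
  · by_cases hl : 1 ≤ l ∧ l < n
    · rw [sigma_eq_mk hk.1 hk.2, rho_eq_mk hl.1 hl.2]
      exact PresentedGroup.mk_eq_mk_of_mul_inv_mem
        (Or.inr (Or.inl ⟨_, _, by dsimp only; omega, Or.inr (Or.inr rfl)⟩))
    · exact rho_eq_one hl ▸ Commute.one_right _
  · exact sigma_eq_one hk ▸ Commute.one_left _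

lemma sigma_braid {k : ℕ} (hk : 1 ≤ k) (hkn : k + 1 < n) :
    sigma n k * sigma n (k + 1) * sigma n k = sigma n (k + 1) * sigma n k * sigma n (k + 1) := by
  rw [sigma_eq_mk hk (by omega), sigma_eq_mk (by omega) hkn]
  exact PresentedGroup.mk_eq_mk_of_mul_inv_mem
    (Or.inl ⟨_, _, by dsimp only; omega, Or.inl rfl⟩)

lemma rho_braid {k : ℕ} (hk : 1 ≤ k) (hkn : k + 1 < n) :
    rho n k * rho n (k + 1) * rho n k = rho n (k + 1) * rho n k * rho n (k + 1) := by
  rw [rho_eq_mk hk (by omega), rho_eq_mk (by omega) hkn]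
  exact PresentedGroup.mk_eq_mk_of_mul_inv_mem
    (Or.inl ⟨_, _, by dsimp only; omega, Or.inr (Or.inl rfl)⟩)

lemma rho_rho_sigma {k : ℕ} (hk : 1 ≤ k) (hkn : k + 1 < n) :
    rho n k * rho n (k + 1) * sigma n k = sigma n (k + 1) * rho n k * rho n (k + 1) := by
  rw [rho_eq_mk hk (by omega), rho_eq_mk (by omega) hkn, sigma_eq_mk hk (by omega),
    sigma_eq_mk (by omega) hkn]
  exact PresentedGroup.mk_eq_mk_of_mul_inv_mem
    (Or.inl ⟨_, _, by dsimp only; omega, Or.inr (Or.inr (Or.inl rfl))⟩)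

lemma rho_sigma_sigma {k : ℕ} (hk : 1 ≤ k) (hkn : k + 1 < n) :
    rho n k * sigma n (k + 1) * sigma n k = sigma n (k + 1) * sigma n k * rho n (k + 1) := by
  rw [rho_eq_mk hk (by omega), rho_eq_mk (by omega) hkn, sigma_eq_mk hk (by omega),
    sigma_eq_mk (by omega) hkn]
  exact PresentedGroup.mk_eq_mk_of_mul_inv_mem
    (Or.inl ⟨_, _, by dsimp only; omega, Or.inr (Or.inr (Or.inr (Or.inl rfl)))⟩)

lemma rho_succ_sigma_sigma {k : ℕ} (hk : 1 ≤ k) (hkn : k + 1 < n) :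
    rho n (k + 1) * sigma n k * sigma n (k + 1) = sigma n k * sigma n (k + 1) * rho n k := by
  rw [rho_eq_mk hk (by omega), rho_eq_mk (by omega) hkn, sigma_eq_mk hk (by omega),
    sigma_eq_mk (by omega) hkn]
  exact PresentedGroup.mk_eq_mk_of_mul_inv_mem
    (Or.inl ⟨_, _, by dsimp only; omega, Or.inr (Or.inr (Or.inr (Or.inr rfl)))⟩)

lemma eq_top_of_sigma_rho_mem {H : Subgroup (UVB n)}
    (hσ : ∀ k, 1 ≤ k → k < n → sigma n k ∈ H) (hρ : ∀ k, 1 ≤ k → k < n → rho n k ∈ H) :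
    H = ⊤ := by
  refine (Subgroup.eq_top_iff' H).mpr (PresentedGroup.generated_by _ H ?_)
  rintro (i | i)
  · have h := hσ (i + 1) (by omega) (by omega)
    rwa [sigma_eq_mk (by omega) (by omega)] at h
  · have h := hρ (i + 1) (by omega) (by omega)
    rwa [rho_eq_mk (by omega) (by omega)] at h

lemma incl_sigma {k : ℕ} (hkn : k < n) : incl n (sigma n k) = sigma (n + 1) k := by
  by_cases hk : 1 ≤ k
  · rw [sigma_eq_mk hk hkn, sigma_eq_mk hk (by omega)]
    exact PresentedGroup.toGroup.of _
  · rw [sigma_eq_one (by omega), sigma_eq_one (by omega), map_one]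

lemma incl_rho {k : ℕ} (hkn : k < n) : incl n (rho n k) = rho (n + 1) k := by
  by_cases hk : 1 ≤ k
  · rw [rho_eq_mk hk hkn, rho_eq_mk hk (by omega)]
    exact PresentedGroup.toGroup.of _
  · rw [rho_eq_one (by omega), rho_eq_one (by omega), map_one]

end Relations

section Stretch

/-- The element `ρ_{j-1}⋯ρ_{i+1} · x_i · ρ_{i+1}⋯ρ_{j-1}`, for `i < j`: the element `x_i` acting on
strands `i` and `i + 1`, transported to strands `i` and `j`. -/
def stretch (x : ℕ → UVB n) (i j : ℕ) : UVB n :=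
  ((List.range' (i + 1) (j - 1 - i)).reverse.map (rho n)).prod * x i *
    ((List.range' (i + 1) (j - 1 - i)).map (rho n)).prod

/-- A family `x_1, …, x_{n-1}` of elements such that `x_i` sees only strands `i` and `i + 1`, and
such that the permutation braids translate `x_i` into `x_{i+1}`. -/
structure IsStrandFamily (x : ℕ → UVB n) : Prop where
  commute_rho {i k : ℕ} : k + 2 ≤ i ∨ i + 2 ≤ k → Commute (rho n k) (x i)
  semiconjBy_succ {i : ℕ} : 1 ≤ i → i + 1 < n →
    SemiconjBy (rho n i * rho n (i + 1)) (x i) (x (i + 1))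

lemma semiconjBy_rho_symm {k : ℕ} {x y : UVB n} (h : SemiconjBy (rho n k) x y) :
    SemiconjBy (rho n k) y x := by
  simpa only [rho_inv] using h.inv_symm_left

lemma isStrandFamily_rho : IsStrandFamily (rho n) where
  commute_rho h := commute_rho_rho h
  semiconjBy_succ hi hin := by
    rw [SemiconjBy, rho_braid hi hin, mul_assoc]

lemma isStrandFamily_sigma : IsStrandFamily (sigma n) where
  commute_rho h := (commute_sigma_rho h.symm).symm
  semiconjBy_succ hi hin := by
    rw [SemiconjBy, rho_rho_sigma hi hin, mul_assoc]

variable {x y : ℕ → UVB n}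

namespace IsStrandFamily

lemma mul (hx : IsStrandFamily x) (hy : IsStrandFamily y) :
    IsStrandFamily fun i ↦ x i * y i where
  commute_rho h := (hx.commute_rho h).mul_right (hy.commute_rho h)
  semiconjBy_succ hi hin := (hx.semiconjBy_succ hi hin).mul_right (hy.semiconjBy_succ hi hin)

lemma inv (hx : IsStrandFamily x) : IsStrandFamily fun i ↦ (x i)⁻¹ where
  commute_rho h := (hx.commute_rho h).inv_right
  semiconjBy_succ hi hin := (hx.semiconjBy_succ hi hin).inv_right

end IsStrandFamily

lemma stretch_succ_self (x : ℕ → UVB n) (i : ℕ) : stretch x i (i + 1) = x i := by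
  simp [stretch]

lemma stretch_succ_right {i j : ℕ} (hij : i < j) :
    stretch x i (j + 1) = rho n j * stretch x i j * rho n j := by
  have hrange : List.range' (i + 1) (j + 1 - 1 - i) = List.range' (i + 1) (j - 1 - i) ++ [j] := by
    rw [show j + 1 - 1 - i = j - 1 - i + 1 by omega, List.range'_1_concat,
      show i + 1 + (j - 1 - i) = j by omega]
  simp only [stretch, hrange, List.reverse_append, List.reverse_singleton, List.map_append,
    List.map_singleton, List.prod_append, List.prod_singleton, mul_assoc]

lemma semiconjBy_rho_stretch_right {i j : ℕ} (hij : i < j) :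
    SemiconjBy (rho n j) (stretch x i j) (stretch x i (j + 1)) := by
  rw [SemiconjBy, stretch_succ_right hij, mul_assoc, rho_mul_self, mul_one]

namespace IsStrandFamily

variable {i j k : ℕ}

lemma commute_rho_stretch_of_add_one_lt_left (hx : IsStrandFamily x) (hki : k + 1 < i)
    (hij : i < j) : Commute (rho n k) (stretch x i j) := by
  induction j, hij using Nat.le_induction with
  | base => exact (stretch_succ_self x i).symm ▸ hx.commute_rho (by omega)
  | succ j hij ih =>
    have hkj : Commute (rho n k) (rho n j) := commute_rho_rho (by omega)
    exact stretch_succ_right hij ▸ (hkj.mul_right ih).mul_right hkj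

lemma commute_rho_stretch_of_right_lt (hx : IsStrandFamily x) (hij : i < j) (hjk : j < k) :
    Commute (rho n k) (stretch x i j) := by
  induction j, hij using Nat.le_induction with
  | base => exact (stretch_succ_self x i).symm ▸ hx.commute_rho (by omega)
  | succ j hij ih =>
    have hkj : Commute (rho n k) (rho n j) := commute_rho_rho (by omega)
    exact stretch_succ_right hij ▸ (hkj.mul_right (ih (by omega))).mul_right hkj

lemma commute_rho_stretch_add_two (hx : IsStrandFamily x) (hik : i < k) (hkn : k + 1 < n) :
    Commute (rho n k) (stretch x i (k + 2)) := by
  have h₁ : SemiconjBy (rho n k) (stretch x i k) (stretch x i (k + 1)) :=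
    semiconjBy_rho_stretch_right hik
  have h₂ : SemiconjBy (rho n (k + 1)) (stretch x i (k + 1)) (stretch x i (k + 2)) :=
    semiconjBy_rho_stretch_right (by omega)
  have h₃ : Commute (rho n (k + 1)) (stretch x i k) := hx.commute_rho_stretch_of_right_lt hik
    k.lt_succ_self
  have hcancel : rho n k * rho n (k + 1) * rho n k * rho n k * rho n (k + 1) = rho n k := by
    simp only [mul_assoc, rho_mul_self, mul_one]
  have hS : SemiconjBy (rho n k * rho n (k + 1) * rho n k) (stretch x i k) (stretch x i (k + 2)) :=
    rho_braid (by omega) hkn ▸ (h₂.mul_left h₁).mul_left h₃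
  exact hcancel ▸ (hS.mul_left (semiconjBy_rho_symm h₁)).mul_left (semiconjBy_rho_symm h₂)

lemma commute_rho_stretch_of_between (hx : IsStrandFamily x) (hik : i < k) (hkj : k + 1 < j)
    (hkn : k + 1 < n) : Commute (rho n k) (stretch x i j) := by
  induction j, hkj using Nat.le_induction with
  | base => exact hx.commute_rho_stretch_add_two hik hkn
  | succ j hkj ih =>
    have hkj' : Commute (rho n k) (rho n j) := commute_rho_rho (by omega)
    exact stretch_succ_right (x := x) (show i < j by omega) ▸
      (hkj'.mul_right ih).mul_right hkj'

lemma semiconjBy_rho_stretch_left (hx : IsStrandFamily x) (hi : 1 ≤ i) (hin : i + 1 < n)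
    (hij : i + 1 < j) : SemiconjBy (rho n i) (stretch x i j) (stretch x (i + 1) j) := by
  induction j, hij using Nat.le_induction with
  | base =>
    have h : SemiconjBy (rho n (i + 1)) (stretch x i (i + 2)) (x i) :=
      stretch_succ_self x i ▸ semiconjBy_rho_symm (semiconjBy_rho_stretch_right i.lt_succ_self)
    have hmul : rho n i * rho n (i + 1) * rho n (i + 1) = rho n i := by
      rw [mul_assoc, rho_mul_self, mul_one]
    exact (stretch_succ_self x (i + 1)).symm ▸ hmul ▸ (hx.semiconjBy_succ hi hin).mul_left h
  | succ j hij ih =>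
    have hij' : Commute (rho n i) (rho n j) := commute_rho_rho (by omega)
    rw [stretch_succ_right (show i < j by omega), stretch_succ_right (show i + 1 < j by omega)]
    exact (SemiconjBy.mul_right hij' ih).mul_right hij'

lemma semiconjBy_rho_stretch (hx : IsStrandFamily x) (hk : 1 ≤ k) (hkn : k < n) (hij : i < j)
    (hjn : j ≤ n) (hne : ¬(i = k ∧ j = k + 1)) :
    SemiconjBy (rho n k) (stretch x i j)
      (stretch x (Equiv.swap k (k + 1) i) (Equiv.swap k (k + 1) j)) := by
  obtain hi | rfl | rfl | hi : k + 1 < i ∨ i = k + 1 ∨ i = k ∨ i < k := by omega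
  · rw [Equiv.swap_apply_of_ne_of_ne (by omega) (by omega),
      Equiv.swap_apply_of_ne_of_ne (by omega) (by omega)]
    exact hx.commute_rho_stretch_of_add_one_lt_left hi hij
  · rw [Equiv.swap_apply_right, Equiv.swap_apply_of_ne_of_ne (by omega) (by omega)]
    exact semiconjBy_rho_symm (hx.semiconjBy_rho_stretch_left hk (by omega) hij)
  · rw [Equiv.swap_apply_left, Equiv.swap_apply_of_ne_of_ne (by omega) (by omega)]
    exact hx.semiconjBy_rho_stretch_left hk (by omega) (by omega)
  rw [Equiv.swap_apply_of_ne_of_ne (a := k) (x := i) (by omega) (by omega)]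
  obtain hj | rfl | rfl | hj : k + 1 < j ∨ j = k + 1 ∨ j = k ∨ j < k := by omega
  · rw [Equiv.swap_apply_of_ne_of_ne (by omega) (by omega)]
    exact hx.commute_rho_stretch_of_between hi hj (by omega)
  · rw [Equiv.swap_apply_right]
    exact semiconjBy_rho_symm (semiconjBy_rho_stretch_right hi)
  · rw [Equiv.swap_apply_left]
    exact semiconjBy_rho_stretch_right hi
  · rw [Equiv.swap_apply_of_ne_of_ne (by omega) (by omega)]
    exact hx.commute_rho_stretch_of_right_lt hij hj

end IsStrandFamily

end Stretch

section Lam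

lemma lam_self (n i : ℕ) : lam n i i = 1 := by
  simp [lam]

lemma lam_of_lt {i j : ℕ} (hij : i < j) :
    lam n i j = stretch (fun k ↦ rho n k * (sigma n k)⁻¹) i j :=
  if_pos hij

lemma lam_of_gt {i j : ℕ} (hij : j < i) :
    lam n i j = stretch (fun k ↦ (sigma n k)⁻¹ * rho n k) j i :=
  (if_neg hij.not_gt).trans (if_pos hij)

lemma lam_succ_right (n i : ℕ) : lam n i (i + 1) = rho n i * (sigma n i)⁻¹ := by
  rw [lam_of_lt i.lt_succ_self, stretch_succ_self]

lemma lam_succ_left (n i : ℕ) : lam n (i + 1) i = (sigma n i)⁻¹ * rho n i := by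
  rw [lam_of_gt i.lt_succ_self, stretch_succ_self]

lemma sigma_eq_inv_lam_mul_rho (n k : ℕ) : sigma n k = (lam n k (k + 1))⁻¹ * rho n k := by
  rw [lam_succ_right, mul_inv_rev, inv_inv, rho_inv, mul_assoc, rho_mul_self, mul_one]

lemma semiconjBy_rho_lam_succ (n k : ℕ) :
    SemiconjBy (rho n k) (lam n k (k + 1)) (lam n (k + 1) k) := by
  rw [SemiconjBy, lam_succ_right, lam_succ_left, rho_mul_cancel_left, mul_assoc, rho_mul_self,
    mul_one]

lemma swap_succ_lt_swap_succ {i j k : ℕ} (hij : i < j) (hne : ¬(i = k ∧ j = k + 1)) :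
    Equiv.swap k (k + 1) i < Equiv.swap k (k + 1) j := by
  simp only [Equiv.swap_apply_def]
  split_ifs <;> omega

theorem semiconjBy_rho_lam {i j k : ℕ} (hk : 1 ≤ k) (hkn : k < n) (hin : i ≤ n) (hjn : j ≤ n) :
    SemiconjBy (rho n k) (lam n i j)
      (lam n (Equiv.swap k (k + 1) i) (Equiv.swap k (k + 1) j)) := by
  obtain hij | rfl | hij := lt_trichotomy i j
  · by_cases h : i = k ∧ j = k + 1
    · rw [h.1, h.2, Equiv.swap_apply_left, Equiv.swap_apply_right]
      exact semiconjBy_rho_lam_succ n k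
    · rw [lam_of_lt hij, lam_of_lt (swap_succ_lt_swap_succ hij h)]
      exact (isStrandFamily_rho.mul isStrandFamily_sigma.inv).semiconjBy_rho_stretch hk hkn hij hjn
        h
  · simpa only [lam_self] using SemiconjBy.one_right _
  · by_cases h : j = k ∧ i = k + 1
    · rw [h.1, h.2, Equiv.swap_apply_left, Equiv.swap_apply_right]
      exact semiconjBy_rho_symm (semiconjBy_rho_lam_succ n k)
    · rw [lam_of_gt hij, lam_of_gt (swap_succ_lt_swap_succ hij h)]
      exact (isStrandFamily_sigma.inv.mul isStrandFamily_rho).semiconjBy_rho_stretch hk hkn hij hin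
        h

lemma incl_stretch {x : ℕ → UVB n} {y : ℕ → UVB (n + 1)} {i j : ℕ}
    (hxy : incl n (x i) = y i) (hij : i < j) (hjn : j ≤ n) :
    incl n (stretch x i j) = stretch y i j := by
  induction j, hij using Nat.le_induction with
  | base => rw [stretch_succ_self, stretch_succ_self, hxy]
  | succ j hij ih =>
    rw [stretch_succ_right hij, stretch_succ_right hij, map_mul, map_mul, incl_rho (by omega),
      ih (by omega)]

lemma incl_lam {i j : ℕ} (hin : i ≤ n) (hjn : j ≤ n) :
    incl n (lam n i j) = lam (n + 1) i j := by
  obtain hij | rfl | hij := lt_trichotomy i j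
  · rw [lam_of_lt hij, lam_of_lt hij]
    refine incl_stretch ?_ hij hjn
    rw [map_mul, map_inv, incl_sigma (by omega), incl_rho (by omega)]
  · rw [lam_self, lam_self, map_one]
  · rw [lam_of_gt hij, lam_of_gt hij]
    refine incl_stretch ?_ hij hin
    rw [map_mul, map_inv, incl_sigma (by omega), incl_rho (by omega)]

end Lam

section Conjugation

theorem exists_semiconjBy_lam (π : Equiv.Perm (Fin n)) :
    ∃ g : UVB n, ∀ i j : Fin n,
      SemiconjBy g (lam n (i + 1) (j + 1)) (lam n (π i + 1) (π j + 1)) := by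
  cases n with
  | zero => exact ⟨1, fun i ↦ i.elim0⟩
  | succ m =>
    have hπ : π ∈ Submonoid.closure
        (Set.range fun k : Fin m ↦ Equiv.swap k.castSucc k.succ) := by
      rw [Equiv.Perm.mclosure_swap_castSucc_succ]
      exact Submonoid.mem_top π
    induction hπ using Submonoid.closure_induction with
    | mem τ hτ =>
      obtain ⟨k, rfl⟩ := hτ
      have hval (i : Fin (m + 1)) : ((Equiv.swap k.castSucc k.succ i : Fin (m + 1)) : ℕ) + 1 =
          Equiv.swap (k + 1 : ℕ) (k + 1 + 1) (i + 1) := by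
        simp only [Equiv.swap_apply_def, Fin.ext_iff, apply_ite Fin.val, Fin.val_castSucc,
          Fin.val_succ]
        split_ifs <;> omega
      refine ⟨rho (m + 1) (k + 1), fun i j ↦ ?_⟩
      rw [hval, hval]
      exact semiconjBy_rho_lam (by omega) (by omega) (by omega) (by omega)
    | one => exact ⟨1, fun i j ↦ SemiconjBy.one_left _⟩
    | mul π τ _ _ hπ hτ =>
      obtain ⟨g, hg⟩ := hπ
      obtain ⟨h, hh⟩ := hτ
      exact ⟨g * h, fun i j ↦ (hg (τ i) (τ j)).mul_left (hh i j)⟩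

lemma exists_conj_lam_of_injective {ι : Type*} [Finite ι] {f f' : ι → ℕ} (hf : f.Injective)
    (hf' : f'.Injective) (hfn : ∀ a, f a ∈ Set.Icc 1 n) (hfn' : ∀ a, f' a ∈ Set.Icc 1 n) :
    ∃ g : UVB n, ∀ a b, g * lam n (f a) (f b) * g⁻¹ = lam n (f' a) (f' b) := by
  have exists_fin {f : ι → ℕ} (hf : f.Injective) (hfn : ∀ a, f a ∈ Set.Icc 1 n) :
      ∃ x : ι → Fin n, x.Injective ∧ ∀ a, (x a : ℕ) + 1 = f a := by
    have hpred (a : ι) : f a - 1 + 1 = f a := Nat.sub_add_cancel (hfn a).1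
    refine ⟨fun a ↦ ⟨f a - 1, (hpred a).trans_le (hfn a).2⟩, fun a b h ↦ hf ?_, hpred⟩
    rw [← hpred a, ← hpred b, Fin.mk.inj h]
  obtain ⟨x, hx_inj, hx⟩ := exists_fin hf hfn
  obtain ⟨x', hx'_inj, hx'⟩ := exists_fin hf' hfn'
  obtain ⟨π, hπ⟩ := Equiv.Perm.exists_extending_pair x x' hx_inj hx'_inj
  obtain ⟨g, hg⟩ := exists_semiconjBy_lam π
  refine ⟨g, fun a b ↦ mul_inv_eq_iff_eq_mul.mpr ?_⟩
  simpa only [hπ, hx, hx'] using (hg (x a) (x b)).eq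

end Conjugation

section Commutation

lemma semiconjBy_rho_lam_move_right {k : ℕ} (hkn : k + 1 < n) :
    SemiconjBy (rho n (k + 1)) (lam n k (k + 1)) (lam n k (k + 2)) := by
  have h := semiconjBy_rho_lam (n := n) (i := k) (j := k + 1) (k := k + 1) (by omega) hkn
    (by omega) (by omega)
  rwa [Equiv.swap_apply_of_ne_of_ne (by omega) (by omega), Equiv.swap_apply_left] at h

lemma semiconjBy_rho_lam_move_left {k : ℕ} (hk : 1 ≤ k) (hkn : k + 1 < n) :
    SemiconjBy (rho n k) (lam n (k + 1) (k + 2)) (lam n k (k + 2)) := by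
  have h := semiconjBy_rho_lam (n := n) (i := k + 1) (j := k + 2) hk (by omega) (by omega)
    (by omega)
  rwa [Equiv.swap_apply_right, Equiv.swap_apply_of_ne_of_ne (by omega) (by omega)] at h

lemma sigma_mul_sigma_succ {k : ℕ} (hk : 1 ≤ k) (hkn : k + 1 < n) :
    sigma n k * sigma n (k + 1) =
      (lam n k (k + 1))⁻¹ * (lam n k (k + 2))⁻¹ * (rho n k * rho n (k + 1)) := by
  have h := (semiconjBy_rho_lam_move_left hk hkn).inv_right.eq
  rw [sigma_eq_inv_lam_mul_rho, sigma_eq_inv_lam_mul_rho, mul_assoc, ← mul_assoc (rho n k), h]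
  simp only [mul_assoc]

lemma sigma_succ_mul_sigma {k : ℕ} (hkn : k + 1 < n) :
    sigma n (k + 1) * sigma n k =
      (lam n (k + 1) (k + 2))⁻¹ * (lam n k (k + 2))⁻¹ * (rho n (k + 1) * rho n k) := by
  have h := (semiconjBy_rho_lam_move_right hkn).inv_right.eq
  rw [sigma_eq_inv_lam_mul_rho, sigma_eq_inv_lam_mul_rho, mul_assoc,
    ← mul_assoc (rho n (k + 1)), h]
  simp only [mul_assoc]

lemma commute_lam_common_left {k : ℕ} (hk : 1 ≤ k) (hkn : k + 1 < n) :
    Commute (lam n k (k + 1)) (lam n k (k + 2)) := by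
  have hswap : SemiconjBy (rho n (k + 1)) ((lam n k (k + 1))⁻¹ * (lam n k (k + 2))⁻¹)
      ((lam n k (k + 2))⁻¹ * (lam n k (k + 1))⁻¹) :=
    have h := (semiconjBy_rho_lam_move_right hkn).inv_right
    h.mul_right (semiconjBy_rho_symm h)
  have h := rho_succ_sigma_sigma hk hkn
  rw [mul_assoc, sigma_mul_sigma_succ hk hkn, ← mul_assoc, hswap.eq, mul_assoc,
    ← mul_assoc (rho n _), ← rho_braid hk hkn, mul_assoc (_ * _) _ (rho n k), mul_left_inj] at h
  exact Commute.inv_inv_iff.mp h.symm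

lemma commute_lam_common_right {k : ℕ} (hk : 1 ≤ k) (hkn : k + 1 < n) :
    Commute (lam n k (k + 2)) (lam n (k + 1) (k + 2)) := by
  have hswap : SemiconjBy (rho n k) ((lam n (k + 1) (k + 2))⁻¹ * (lam n k (k + 2))⁻¹)
      ((lam n k (k + 2))⁻¹ * (lam n (k + 1) (k + 2))⁻¹) :=
    have h := (semiconjBy_rho_lam_move_left hk hkn).inv_right
    h.mul_right (semiconjBy_rho_symm h)
  have h := rho_sigma_sigma hk hkn
  rw [mul_assoc, sigma_succ_mul_sigma hkn, ← mul_assoc, hswap.eq, mul_assoc,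
    ← mul_assoc (rho n _), rho_braid hk hkn, mul_assoc (_ * _) _ (rho n (k + 1)), mul_left_inj] at h
  exact Commute.inv_inv_iff.mp h

lemma commute_lam_consecutive {k : ℕ} (hk : 1 ≤ k) (hkn : k + 1 < n) :
    Commute (lam n k (k + 1)) (lam n (k + 1) (k + 2)) := by
  have hxy : Commute (lam n k (k + 1))⁻¹ (lam n k (k + 2))⁻¹ :=
    (commute_lam_common_left hk hkn).inv_inv
  have hyz : Commute (lam n k (k + 2))⁻¹ (lam n (k + 1) (k + 2))⁻¹ :=
    (commute_lam_common_right hk hkn).inv_inv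
  have hxz : SemiconjBy (rho n k * rho n (k + 1)) (lam n k (k + 1))⁻¹ (lam n (k + 1) (k + 2))⁻¹ :=
    ((semiconjBy_rho_symm (semiconjBy_rho_lam_move_left hk hkn)).mul_left
      (semiconjBy_rho_lam_move_right hkn)).inv_right
  have hzx : SemiconjBy (rho n (k + 1) * rho n k) (lam n (k + 1) (k + 2))⁻¹ (lam n k (k + 1))⁻¹ :=
    ((semiconjBy_rho_symm (semiconjBy_rho_lam_move_right hkn)).mul_left
      (semiconjBy_rho_lam_move_left hk hkn)).inv_right
  have hleft : sigma n k * sigma n (k + 1) * sigma n k =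
      (lam n k (k + 2))⁻¹ * ((lam n k (k + 1))⁻¹ * (lam n (k + 1) (k + 2))⁻¹) *
        (rho n k * rho n (k + 1) * rho n k) := by
    rw [sigma_mul_sigma_succ hk hkn, sigma_eq_inv_lam_mul_rho n k, mul_assoc,
      ← mul_assoc (rho n k * _), hxz.eq, hxy.eq]
    simp only [mul_assoc]
  have hright : sigma n (k + 1) * sigma n k * sigma n (k + 1) =
      (lam n k (k + 2))⁻¹ * ((lam n (k + 1) (k + 2))⁻¹ * (lam n k (k + 1))⁻¹) *
        (rho n k * rho n (k + 1) * rho n k) := by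
    rw [sigma_succ_mul_sigma hkn, sigma_eq_inv_lam_mul_rho n (k + 1), mul_assoc,
      ← mul_assoc (rho n (k + 1) * _), hzx.eq, ← hyz.eq, rho_braid hk hkn]
    simp only [mul_assoc]
  have h := sigma_braid hk hkn
  rw [hleft, hright, mul_left_inj, mul_right_inj] at h
  exact Commute.inv_inv_iff.mp h

lemma commute_lam_succ_of_add_two_le {k l : ℕ} (hkl : k + 2 ≤ l) :
    Commute (lam n k (k + 1)) (lam n l (l + 1)) := by
  have hσσ : Commute (sigma n k) (sigma n l) := commute_sigma_sigma (Or.inl hkl)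
  have hσρ : Commute (sigma n k) (rho n l) := commute_sigma_rho (Or.inl hkl)
  have hρσ : Commute (rho n k) (sigma n l) := (commute_sigma_rho (Or.inr hkl)).symm
  have hρρ : Commute (rho n k) (rho n l) := commute_rho_rho (Or.inl hkl)
  rw [lam_succ_right, lam_succ_right]
  exact (hρρ.mul_right hρσ.inv_right).mul_left (hσρ.inv_left.mul_right hσσ.inv_inv)

lemma commute_lam_of_injective {m : ℕ} {f : Fin m → ℕ} (hf : f.Injective)
    (hfn : ∀ a, f a ∈ Set.Icc 1 n) {a b c d : Fin m}
    (h : Commute (lam n (a + 1) (b + 1)) (lam n (c + 1) (d + 1))) :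
    Commute (lam n (f a) (f b)) (lam n (f c) (f d)) := by
  have hmn : m ≤ n := by
    simpa using Finset.card_le_card_of_injOn f (s := .univ) (t := .Icc 1 n)
      (fun a _ ↦ by simpa using hfn a) hf.injOn
  obtain ⟨g, hg⟩ := exists_conj_lam_of_injective (f := fun a : Fin m ↦ (a : ℕ) + 1)
    (fun a b hab ↦ Fin.ext (Nat.succ_injective hab)) hf (fun a ↦ ⟨by omega, by omega⟩) hfn
  rw [← hg, ← hg, Commute.conj_iff]
  exact h

lemma commute_lam_of_pairwise_ne {i j k : ℕ} (hi : i ∈ Set.Icc 1 n) (hj : j ∈ Set.Icc 1 n)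
    (hk : k ∈ Set.Icc 1 n) (hij : i ≠ j) (hik : i ≠ k) (hjk : j ≠ k) :
    Commute (lam n i j) (lam n i k) ∧ Commute (lam n i k) (lam n j k) ∧
      Commute (lam n i j) (lam n j k) := by
  have hinj : (![i, j, k]).Injective := by
    simp [Function.Injective, Fin.forall_fin_succ, *, Ne.symm]
  have hmem : ∀ a, ![i, j, k] a ∈ Set.Icc 1 n := by
    simp only [Fin.forall_fin_succ, IsEmpty.forall_iff, and_true]
    exact ⟨hi, hj, hk⟩
  have hn : 1 + 1 < n := by simp only [Set.mem_Icc] at hi hj hk; omega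
  exact ⟨commute_lam_of_injective (a := 0) (b := 1) (c := 0) (d := 2) hinj hmem
      (commute_lam_common_left le_rfl hn),
    commute_lam_of_injective (a := 0) (b := 2) (c := 1) (d := 2) hinj hmem
      (commute_lam_common_right le_rfl hn),
    commute_lam_of_injective (a := 0) (b := 1) (c := 1) (d := 2) hinj hmem
      (commute_lam_consecutive le_rfl hn)⟩

lemma commute_lam_of_disjoint {i j k l : ℕ} (hi : i ∈ Set.Icc 1 n) (hj : j ∈ Set.Icc 1 n)
    (hk : k ∈ Set.Icc 1 n) (hl : l ∈ Set.Icc 1 n) (hij : i ≠ j) (hik : i ≠ k) (hil : i ≠ l)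
    (hjk : j ≠ k) (hjl : j ≠ l) (hkl : k ≠ l) : Commute (lam n i j) (lam n k l) := by
  have hinj : (![i, j, k, l]).Injective := by
    simp [Function.Injective, Fin.forall_fin_succ, *, Ne.symm]
  have hmem : ∀ a, ![i, j, k, l] a ∈ Set.Icc 1 n := by
    simp only [Fin.forall_fin_succ, IsEmpty.forall_iff, and_true]
    exact ⟨hi, hj, hk, hl⟩
  exact commute_lam_of_injective (a := 0) (b := 1) (c := 2) (d := 3) hinj hmem
    (commute_lam_succ_of_add_two_le le_rfl)

theorem commute_lam {i j k l : ℕ} (hi : i ∈ Set.Icc 1 n) (hj : j ∈ Set.Icc 1 n)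
    (hk : k ∈ Set.Icc 1 n) (hl : l ∈ Set.Icc 1 n) (h : s(i, j) ≠ s(k, l)) :
    Commute (lam n i j) (lam n k l) := by
  obtain rfl | hij := eq_or_ne i j
  · exact lam_self n i ▸ Commute.one_left _
  obtain rfl | hkl := eq_or_ne k l
  · exact lam_self n k ▸ Commute.one_right _
  simp only [ne_eq, Sym2.eq_iff, not_or, not_and] at h
  obtain rfl | hik := eq_or_ne i k
  · exact (commute_lam_of_pairwise_ne hi hj hl hij hkl (h.1 rfl)).1
  obtain rfl | hil := eq_or_ne i l
  · exact (commute_lam_of_pairwise_ne hk hi hj hkl (Ne.symm (h.2 rfl)) hij).2.2.symm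
  obtain rfl | hjk := eq_or_ne j k
  · exact (commute_lam_of_pairwise_ne hi hj hl hij hil hkl).2.2
  obtain rfl | hjl := eq_or_ne j l
  · exact (commute_lam_of_pairwise_ne hi hk hj hik hij hkl).2.1
  exact commute_lam_of_disjoint hi hj hk hl hij hik hil hjk hjl hkl

end Commutation

section LamSubgroup

/-- The subgroup generated by the elements `λ_{i,j}`; it is the unrestricted virtual pure braid
group, the kernel of `ι`. -/
def lamSubgroup (n : ℕ) : Subgroup (UVB n) :=
  Subgroup.closure (Set.image2 (lam n) (Set.Icc 1 n) (Set.Icc 1 n))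

lemma lam_mem_lamSubgroup {i j : ℕ} (hi : i ∈ Set.Icc 1 n) (hj : j ∈ Set.Icc 1 n) :
    lam n i j ∈ lamSubgroup n :=
  Subgroup.subset_closure (Set.mem_image2_of_mem hi hj)

lemma swap_succ_mem_Icc {i k : ℕ} (hk : 1 ≤ k) (hkn : k < n) (hi : i ∈ Set.Icc 1 n) :
    Equiv.swap k (k + 1) i ∈ Set.Icc 1 n := by
  simp only [Set.mem_Icc, Equiv.swap_apply_def] at hi ⊢
  split_ifs <;> omega

lemma rho_mem_normalizer_lamSubgroup {k : ℕ} (hk : 1 ≤ k) (hkn : k < n) :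
    rho n k ∈ Subgroup.normalizer (lamSubgroup n : Set (UVB n)) := by
  have hconj {g : UVB n} (hg : g ∈ Set.image2 (lam n) (Set.Icc 1 n) (Set.Icc 1 n)) :
      rho n k * g * (rho n k)⁻¹ ∈ Set.image2 (lam n) (Set.Icc 1 n) (Set.Icc 1 n) := by
    obtain ⟨i, hi, j, hj, rfl⟩ := hg
    rw [(semiconjBy_rho_lam hk hkn hi.2 hj.2).eq, mul_inv_cancel_right]
    exact Set.mem_image2_of_mem (swap_succ_mem_Icc hk hkn hi) (swap_succ_mem_Icc hk hkn hj)
  refine Subgroup.normalizer_le_normalizer_closure _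
    (Subgroup.mem_set_normalizer_iff.mpr fun g ↦ ⟨hconj, fun hg ↦ ?_⟩)
  simpa only [rho_inv, mul_assoc, rho_mul_self, rho_mul_cancel_left, mul_one] using hconj hg

instance lamSubgroup_normal (n : ℕ) : (lamSubgroup n).Normal := by
  rw [← Subgroup.normalizer_eq_top_iff]
  refine eq_top_of_sigma_rho_mem (fun k hk hkn ↦ ?_) fun k ↦ rho_mem_normalizer_lamSubgroup
  have hlam : lam n k (k + 1) ∈ lamSubgroup n :=
    lam_mem_lamSubgroup ⟨hk, hkn.le⟩ ⟨by omega, hkn⟩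
  rw [sigma_eq_inv_lam_mul_rho]
  exact mul_mem (Subgroup.le_normalizer (inv_mem hlam)) (rho_mem_normalizer_lamSubgroup hk hkn)

theorem ker_le_lamSubgroup {ι : UVB n →* Equiv.Perm (Fin n)} (hι : IsIota n ι)
    {s : Equiv.Perm (Fin n) →* UVB n} (hs : IsPermSection n s) : ι.ker ≤ lamSubgroup n := by
  let q := QuotientGroup.mk' (lamSubgroup n)
  have hq : q.eqLocus ((q.comp s).comp ι) = ⊤ := by
    refine eq_top_of_sigma_rho_mem (fun k hk hkn ↦ ?_) fun k hk hkn ↦ ?_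
    · have hlam : q (lam n k (k + 1)) = 1 :=
        (QuotientGroup.eq_one_iff _).mpr (lam_mem_lamSubgroup ⟨hk, hkn.le⟩ ⟨by omega, hkn⟩)
      change q (sigma n k) = q (s (ι (sigma n k)))
      rw [(hι k hk (by omega)).1, hs k hk (by omega), sigma_eq_inv_lam_mul_rho, map_mul, map_inv,
        hlam, inv_one, one_mul]
    · change q (rho n k) = q (s (ι (rho n k)))
      rw [(hι k hk (by omega)).2, hs k hk (by omega)]
  intro g hg
  have hqg : q g = q (s (ι g)) := (hq.ge (Subgroup.mem_top g) :)
  rw [← QuotientGroup.eq_one_iff]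
  rwa [MonoidHom.mem_ker.mp hg, map_one, map_one] at hqg

end LamSubgroup

end UVB

namespace Markov

open UVB

variable {n : ℕ}

lemma refl (a : Σ n, UVB n) : Markov a a :=
  Relation.EqvGen.refl a

lemma symm {a b : Σ n, UVB n} (h : Markov a b) : Markov b a :=
  Relation.EqvGen.symm a b h

lemma trans {a b c : Σ n, UVB n} (hab : Markov a b) (hbc : Markov b c) : Markov a c :=
  Relation.EqvGen.trans a b c hab hbc

lemma conj (α γ : UVB n) : Markov ⟨n, α⟩ ⟨n, γ * α * γ⁻¹⟩ :=
  Relation.EqvGen.rel _ _ (MarkovBase.conj n α γ)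

lemma stabVirt (α : UVB n) : Markov ⟨n, α⟩ ⟨n + 1, incl n α * rho (n + 1) n⟩ :=
  Relation.EqvGen.rel _ _ (MarkovBase.stabVirt n α)

lemma of_semiconjBy {α β γ : UVB n} (h : SemiconjBy γ α β) : Markov ⟨n, α⟩ ⟨n, β⟩ := by
  simpa only [h.eq, mul_inv_cancel_right] using conj α γ

lemma mul_comm (α β : UVB n) : Markov ⟨n, α * β⟩ ⟨n, β * α⟩ :=
  of_semiconjBy (γ := β) (mul_assoc β α β).symm

lemma stabVirt_conj (α γ : UVB n) :
    Markov ⟨n, α⟩ ⟨n + 1, incl n α * (incl n γ * rho (n + 1) n * (incl n γ)⁻¹)⟩ := by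
  have h₁ : Markov ⟨n, α⟩ ⟨n + 1, incl n (γ⁻¹ * α * γ) * rho (n + 1) n⟩ := by
    simpa only [inv_inv] using (conj α γ⁻¹).trans (stabVirt _)
  refine h₁.trans (of_semiconjBy (γ := incl n γ) ?_)
  simp only [SemiconjBy, map_mul, map_inv]
  group

end Markov

namespace UVB

variable {n : ℕ}

section DoubleStabilization

/-- The inclusion of the braids on `n` strands into those on `n + 2` strands. -/
def inclTwo (n : ℕ) : UVB n →* UVB (n + 2) :=
  (incl (n + 1)).comp (incl n)

/-- The permutation braid of `UVB (n + 4)` that reverses the last four strands: the product of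
`ρ_{n+2}`, exchanging the middle two, and a conjugate of `ρ_{n+3}`, exchanging the outer two. -/
def reverseLastFour (n : ℕ) : UVB (n + 4) :=
  rho (n + 4) (n + 2) *
    (rho (n + 4) (n + 1) * rho (n + 4) (n + 2) * rho (n + 4) (n + 3) *
      (rho (n + 4) (n + 1) * rho (n + 4) (n + 2))⁻¹)

lemma inclTwo_lam {i j : ℕ} (hin : i ≤ n) (hjn : j ≤ n) :
    inclTwo n (lam n i j) = lam (n + 2) i j := by
  rw [inclTwo, MonoidHom.comp_apply, incl_lam hin hjn, incl_lam (by omega) (by omega)]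

lemma commute_lam_last_inclTwo (g : UVB n) :
    Commute (lam (n + 2) (n + 2) (n + 1)) (inclTwo n g) := by
  rw [lam_succ_left]
  set x := (sigma (n + 2) (n + 1))⁻¹ * rho (n + 2) (n + 1)
  have htop : (Subgroup.centralizer {x}).comap (inclTwo n) = ⊤ := by
    refine eq_top_of_sigma_rho_mem (fun k _ hkn ↦ ?_) fun k _ hkn ↦ ?_ <;>
      rw [Subgroup.mem_comap, Subgroup.mem_centralizer_singleton_iff, inclTwo,
        MonoidHom.comp_apply]
    · rw [incl_sigma hkn, incl_sigma (by omega)]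
      exact (commute_sigma_sigma (by omega)).inv_right.mul_right (commute_sigma_rho (by omega))
    · rw [incl_rho hkn, incl_rho (by omega)]
      exact (commute_sigma_rho (by omega)).symm.inv_right.mul_right (commute_rho_rho (by omega))
  have hg : g ∈ (Subgroup.centralizer {x}).comap (inclTwo n) := htop ▸ Subgroup.mem_top g
  exact (Subgroup.mem_centralizer_singleton_iff.mp hg).symm

lemma swap_add_left (m k l i : ℕ) :
    Equiv.swap (m + k) (m + l) (m + i) = m + Equiv.swap k l i :=
  ((add_right_injective m).map_swap k l i).symm

lemma semiconjBy_reverseLastFour_lam (n : ℕ) {i j : ℕ} (hi : i ∈ Set.Icc 1 4)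
    (hj : j ∈ Set.Icc 1 4) :
    SemiconjBy (reverseLastFour n) (lam (n + 4) (n + i) (n + j))
      (lam (n + 4) (n + (5 - i)) (n + (5 - j))) := by
  have hswap {k i : ℕ} (hk : k < 4) (hi : i ≤ 4) : Equiv.swap k (k + 1) i ≤ 4 := by
    grind
  have hstep {k : ℕ} (hk : 1 ≤ k) (hk4 : k < 4) {i j : ℕ} (hi : i ≤ 4) (hj : j ≤ 4) :
      SemiconjBy (rho (n + 4) (n + k)) (lam (n + 4) (n + i) (n + j))
        (lam (n + 4) (n + Equiv.swap k (k + 1) i) (n + Equiv.swap k (k + 1) j)) := by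
    simpa only [add_assoc, swap_add_left] using semiconjBy_rho_lam (n := n + 4) (k := n + k)
      (i := n + i) (j := n + j) (by omega) (by omega) (by omega) (by omega)
  have hswaps : ∀ i ∈ Set.Icc 1 4, Equiv.swap 2 3 (Equiv.swap 1 2 (Equiv.swap 2 3
      (Equiv.swap 3 4 (Equiv.swap 2 3 (Equiv.swap 1 2 i))))) = 5 - i := by
    rintro i ⟨h₁, h₄⟩
    interval_cases i <;> rfl
  rw [← hswaps i hi, ← hswaps j hj, reverseLastFour, mul_inv_rev, rho_inv, rho_inv]
  refine (hstep ?_ ?_ ?_ ?_).mul_left ((((hstep ?_ ?_ ?_ ?_).mul_left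
    (hstep ?_ ?_ ?_ ?_)).mul_left (hstep ?_ ?_ ?_ ?_)).mul_left
      ((hstep ?_ ?_ ?_ ?_).mul_left (hstep ?_ ?_ hi.2 hj.2)))
  all_goals grind

lemma markov_double_stabilization {z β : UVB (n + 2)} (w : UVB (n + 2)) (hzβ : Commute z β) :
    Markov ⟨n + 2, w * z * β⟩ ⟨n + 4, MulAut.conj (rho (n + 4) (n + 2)) (inclTwo (n + 2) z) *
      inclTwo (n + 2) (w * β) * reverseLastFour n⟩ := by
  have h₁ : Markov ⟨n + 2, w * z * β⟩ ⟨n + 3, rho (n + 3) (n + 2) * incl (n + 2) z *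
      rho (n + 3) (n + 2) * (incl (n + 2) (w * β) * rho (n + 3) (n + 2))⟩ := by
    refine (Markov.stabVirt _).trans ?_
    convert Markov.mul_comm (incl (n + 2) (w * β) * rho (n + 3) (n + 2))
      (rho (n + 3) (n + 2) * incl (n + 2) z * rho (n + 3) (n + 2)) using 2
    rw [mul_assoc w, hzβ.eq, ← mul_assoc w, map_mul _ (w * β)]
    simp only [mul_assoc, rho_mul_cancel_left]
  convert h₁.trans (Markov.stabVirt_conj _ (rho (n + 3) (n + 1) * rho (n + 3) (n + 2))) using 2
  simp only [map_mul, inclTwo, reverseLastFour, MulAut.conj_apply, MonoidHom.comp_apply, rho_inv,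
    incl_rho (n := n + 3) (k := n + 2) (by omega), incl_rho (n := n + 3) (k := n + 1) (by omega),
    mul_assoc]

end DoubleStabilization

section Exchange

/-- The pure braid that slides `λ_{n+1,n+2}` off a doubly stabilized braid: the
second factor removes it from its old place, the first inserts its image under `reverseLastFour` at
the new strands. -/
def slide (n : ℕ) : UVB (n + 4) :=
  lam (n + 4) (n + 4) (n + 3) * lam (n + 4) (n + 1) (n + 2)

lemma commute_slide_lam (n : ℕ) {i j : ℕ} (hi : i ∈ Set.Icc 1 4) (hj : j ∈ Set.Icc 1 4)
    (h₁₂ : s(i, j) ≠ s(1, 2)) (h₄₃ : s(i, j) ≠ s(4, 3)) :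
    Commute (slide n) (lam (n + 4) (n + i) (n + j)) := by
  refine Commute.mul_left (commute_lam ?_ ?_ ?_ ?_ ?_) (commute_lam ?_ ?_ ?_ ?_ ?_) <;>
    simp only [Set.mem_Icc, ne_eq, Sym2.eq_iff] at * <;> omega

lemma commute_slide_reverseLastFour (n : ℕ) : Commute (slide n) (reverseLastFour n) := by
  have hslide : lam (n + 4) (n + 1) (n + 2) * lam (n + 4) (n + 4) (n + 3) = slide n :=
    (commute_lam (by grind) (by grind) (by grind) (by grind) (by grind)).eq
  have h : SemiconjBy (reverseLastFour n) (slide n)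
      (lam (n + 4) (n + 1) (n + 2) * lam (n + 4) (n + 4) (n + 3)) :=
    (semiconjBy_reverseLastFour_lam n (i := 4) (j := 3) (by simp) (by simp)).mul_right
      (semiconjBy_reverseLastFour_lam n (i := 1) (j := 2) (by simp) (by simp))
  exact (hslide ▸ h : Commute (reverseLastFour n) (slide n)).symm

lemma conj_rho_inclTwo_lam {i j : ℕ} (hi : i ≤ n + 2) (hj : j ≤ n + 2) :
    MulAut.conj (rho (n + 4) (n + 2)) (inclTwo (n + 2) (lam (n + 2) i j)) =
      lam (n + 4) (Equiv.swap (n + 2) (n + 3) i) (Equiv.swap (n + 2) (n + 3) j) := by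
  rw [inclTwo_lam hi hj, MulAut.conj_apply, mul_inv_eq_iff_eq_mul]
  exact semiconjBy_rho_lam (by omega) (by omega) (by omega) (by omega)

lemma commute_slide_conj_rho_inclTwo {z : UVB (n + 2)}
    (hz : z ∈ Subgroup.closure {lam (n + 2) (n + 1) (n + 2), lam (n + 2) (n + 2) (n + 1)}) :
    Commute (slide n) (MulAut.conj (rho (n + 4) (n + 2)) (inclTwo (n + 2) z)) := by
  let f : UVB (n + 2) →* UVB (n + 4) :=
    (MulAut.conj (rho (n + 4) (n + 2))).toMonoidHom.comp (inclTwo (n + 2))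
  have hle : Subgroup.closure {lam (n + 2) (n + 1) (n + 2), lam (n + 2) (n + 2) (n + 1)} ≤
      (Subgroup.centralizer {slide n}).comap f := by
    rw [Subgroup.closure_le]
    have hswap : Equiv.swap (n + 2) (n + 3) (n + 1) = n + 1 := by grind
    rintro _ (rfl | rfl) <;>
      refine Subgroup.mem_centralizer_singleton_iff.mpr (Commute.symm ?_) <;>
      simp only [f, MonoidHom.comp_apply, MulEquiv.toMonoidHom_eq_coe, MonoidHom.coe_coe] <;>
      rw [conj_rho_inclTwo_lam (by omega) (by omega), hswap, Equiv.swap_apply_left]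
    · exact commute_slide_lam n (i := 1) (j := 3) (by simp) (by simp) (by grind) (by grind)
    · exact commute_slide_lam n (i := 3) (j := 1) (by simp) (by simp) (by grind) (by grind)
  exact (Subgroup.mem_centralizer_singleton_iff.mp (hle hz)).symm

lemma semiconjBy_slide_inclTwo {g h : UVB (n + 2)}
    (hgh : SemiconjBy (lam (n + 2) (n + 1) (n + 2)) g h) :
    SemiconjBy (slide n) (inclTwo (n + 2) g) (inclTwo (n + 2) h) := by
  refine SemiconjBy.mul_left (commute_lam_last_inclTwo h) ?_
  rw [← inclTwo_lam (n := n + 2) (by omega) le_rfl]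
  exact hgh.map (inclTwo (n + 2))

lemma markov_exchange_last {z β : UVB (n + 2)}
    (hz : z ∈ Subgroup.closure {lam (n + 2) (n + 1) (n + 2), lam (n + 2) (n + 2) (n + 1)})
    (hβ : β ∈ Subgroup.centralizer {lam (n + 2) (n + 1) (n + 2), lam (n + 2) (n + 2) (n + 1)}) :
    Markov
      ⟨n + 2, lam (n + 2) (n + 1) (n + 2) * lam (n + 2) (n + 2) (n + 1) * z * β⟩
      ⟨n + 2, lam (n + 2) (n + 2) (n + 1) * lam (n + 2) (n + 1) (n + 2) * z * β⟩ := by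
  have hzβ : Commute z β := by
    rw [← Subgroup.centralizer_closure] at hβ
    exact Subgroup.mem_centralizer_iff.mp hβ z hz
  refine (markov_double_stabilization _ hzβ).trans (Markov.symm ?_)
  refine (markov_double_stabilization _ hzβ).trans (.of_semiconjBy (γ := slide n) ?_)
  refine SemiconjBy.mul_right (SemiconjBy.mul_right (commute_slide_conj_rho_inclTwo hz)
    (semiconjBy_slide_inclTwo ?_)) (commute_slide_reverseLastFour n)
  exact SemiconjBy.mul_right (mul_assoc _ _ _).symm
    (Subgroup.mem_centralizer_iff.mp hβ _ (Set.mem_insert _ _))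

end Exchange

section Pair

variable {i j : ℕ}

lemma lamSubgroup_le_closure_sup_centralizer (hi : i ∈ Set.Icc 1 n) (hj : j ∈ Set.Icc 1 n) :
    lamSubgroup n ≤ Subgroup.closure {lam n i j, lam n j i} ⊔
      Subgroup.centralizer {lam n i j, lam n j i} := by
  rw [lamSubgroup, Subgroup.closure_le]
  rintro _ ⟨k, hk, l, hl, rfl⟩
  by_cases h : s(k, l) = s(i, j)
  · refine Subgroup.mem_sup_left (Subgroup.subset_closure ?_)
    rcases Sym2.eq_iff.mp h with ⟨rfl, rfl⟩ | ⟨rfl, rfl⟩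
    · exact Set.mem_insert _ _
    · exact Set.mem_insert_of_mem _ rfl
  · refine Subgroup.mem_sup_right (Subgroup.mem_centralizer_iff.mpr ?_)
    rintro _ (rfl | rfl)
    · exact commute_lam hi hj hk hl (Ne.symm h)
    · exact commute_lam hj hi hk hl (Sym2.eq_swap (a := i) ▸ Ne.symm h)

lemma exists_closure_mul_centralizer (hi : i ∈ Set.Icc 1 n) (hj : j ∈ Set.Icc 1 n) {g : UVB n}
    (hg : g ∈ lamSubgroup n) : ∃ z ∈ Subgroup.closure {lam n i j, lam n j i},
      ∃ β ∈ Subgroup.centralizer {lam n i j, lam n j i}, z * β = g := by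
  have hnorm : Subgroup.centralizer {lam n i j, lam n j i} ≤
      Subgroup.normalizer (Subgroup.closure {lam n i j, lam n j i}) := by
    rw [← Subgroup.centralizer_closure]
    exact Subgroup.centralizer_le_normalizer _
  have hmem := lamSubgroup_le_closure_sup_centralizer hi hj hg
  rwa [← SetLike.mem_coe, Subgroup.coe_mul_of_right_le_normalizer_left _ _ hnorm,
    Set.mem_mul] at hmem

end Pair

section Insertable

open scoped commutatorElement

/-- The elements `c` of `K` that can be inserted in front of any braid in `K` without changing its
fused Markov class. -/
def markovInsertable (K : Subgroup (UVB n)) : Subgroup (UVB n) where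
  carrier := {c | c ∈ K ∧ ∀ α ∈ K, Markov ⟨n, c * α⟩ ⟨n, α⟩}
  one_mem' := ⟨one_mem K, fun α _ ↦ by rw [one_mul]; exact Markov.refl _⟩
  mul_mem' := by
    rintro c d ⟨hcK, hc⟩ ⟨hdK, hd⟩
    refine ⟨mul_mem hcK hdK, fun α hα ↦ ?_⟩
    rw [mul_assoc]
    exact (hc _ (mul_mem hdK hα)).trans (hd α hα)
  inv_mem' := by
    rintro c ⟨hcK, hc⟩
    refine ⟨inv_mem hcK, fun α hα ↦ Markov.symm ?_⟩
    simpa only [mul_inv_cancel_left] using hc _ (mul_mem (inv_mem hcK) hα)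

instance markovInsertable_normal (K : Subgroup (UVB n)) [hK : K.Normal] :
    (markovInsertable K).Normal where
  conj_mem := by
    rintro c ⟨hcK, hc⟩ g
    refine ⟨hK.conj_mem c hcK g, fun α hα ↦ ?_⟩
    have hα' : g⁻¹ * α * g ∈ K := by
      simpa only [inv_inv] using hK.conj_mem α hα g⁻¹
    refine Markov.trans (.of_semiconjBy (γ := g⁻¹) ?_)
      ((hc _ hα').trans (.of_semiconjBy (γ := g) ?_))
    · simp only [SemiconjBy]
      group
    · simp only [SemiconjBy]
      group

lemma commutator_lam_last_mem_markovInsertable (n : ℕ) :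
    ⁅lam (n + 2) (n + 1) (n + 2), lam (n + 2) (n + 2) (n + 1)⁆ ∈
      markovInsertable (lamSubgroup (n + 2)) := by
  have h₁ : n + 1 ∈ Set.Icc 1 (n + 2) := ⟨by omega, by omega⟩
  have h₂ : n + 2 ∈ Set.Icc 1 (n + 2) := ⟨by omega, le_rfl⟩
  have hx := lam_mem_lamSubgroup h₁ h₂
  have hy := lam_mem_lamSubgroup h₂ h₁
  refine ⟨Subgroup.commutator_le_left _ _ (Subgroup.commutator_mem_commutator hx hy), fun α hα ↦ ?_⟩
  obtain ⟨z, hz, β, hβ, hzβ⟩ := exists_closure_mul_centralizer h₁ h₂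
    (mul_mem (mul_mem (inv_mem hx) (inv_mem hy)) hα)
  have h := markov_exchange_last hz hβ
  simp only [mul_assoc _ z, hzβ] at h
  convert h using 2
  · rw [commutatorElement_def]
    group
  · group

lemma commutator_lam_mem_markovInsertable {i j k l : ℕ} (hi : i ∈ Set.Icc 1 n)
    (hj : j ∈ Set.Icc 1 n) (hk : k ∈ Set.Icc 1 n) (hl : l ∈ Set.Icc 1 n) :
    ⁅lam n i j, lam n k l⁆ ∈ markovInsertable (lamSubgroup n) := by
  by_cases h : s(i, j) = s(k, l)
  swap
  · rw [commutatorElement_eq_one_iff_commute.mpr (commute_lam hi hj hk hl h)]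
    exact one_mem _
  rcases Sym2.eq_iff.mp h with ⟨rfl, rfl⟩ | ⟨rfl, rfl⟩
  · rw [commutatorElement_self]
    exact one_mem _
  rcases eq_or_ne i j with rfl | hij
  · rw [commutatorElement_self]
    exact one_mem _
  obtain ⟨m, rfl⟩ : ∃ m, n = m + 2 := Nat.exists_eq_add_of_le' (by grind)
  obtain ⟨g, hg⟩ := exists_conj_lam_of_injective (n := m + 2) (f := ![m + 1, m + 2])
    (f' := ![i, j]) (by simp [Function.Injective, Fin.forall_fin_two])
    (by simp [Function.Injective, Fin.forall_fin_two, hij, hij.symm])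
    (by simp [Fin.forall_fin_two]) (Fin.forall_fin_two.mpr ⟨hi, hj⟩)
  have h := (markovInsertable_normal (lamSubgroup (m + 2))).conj_mem _
    (commutator_lam_last_mem_markovInsertable m) g
  rw [conjugate_commutatorElement] at h
  simpa using (hg 0 1 ▸ hg 1 0 ▸ h)

lemma commutator_closure_le {G : Type*} [Group G] {S : Set G} {N : Subgroup G} [N.Normal]
    (h : ∀ a ∈ S, ∀ b ∈ S, ⁅a, b⁆ ∈ N) : ⁅Subgroup.closure S, Subgroup.closure S⁆ ≤ N := by
  rw [← QuotientGroup.ker_mk' N, ← Subgroup.map_eq_bot_iff, Subgroup.map_commutator,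
    MonoidHom.map_closure, Subgroup.commutator_eq_bot_iff_le_centralizer,
    Subgroup.centralizer_closure, Subgroup.closure_le]
  rintro _ ⟨a, ha, rfl⟩
  refine Subgroup.mem_centralizer_iff.mpr ?_
  rintro _ ⟨b, hb, rfl⟩
  rw [← commutatorElement_eq_one_iff_mul_comm, ← map_commutatorElement, ← MonoidHom.mem_ker,
    QuotientGroup.ker_mk']
  exact h b hb a ha

theorem commutator_lamSubgroup_le_markovInsertable (n : ℕ) :
    ⁅lamSubgroup n, lamSubgroup n⁆ ≤ markovInsertable (lamSubgroup n) := by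
  refine commutator_closure_le ?_
  rintro _ ⟨i, hi, j, hj, rfl⟩ _ ⟨k, hk, l, hl, rfl⟩
  exact commutator_lam_mem_markovInsertable hi hj hk hl

end Insertable

end UVB

/-! ## Statement 9 -/

/-- Corollary 1 of the paper.  For `n ≥ 2` and α, β ∈ UVP n: if
there is a permutation π ∈ S_n with `s(π) α s(π)⁻¹ β⁻¹ ∈ [UVP n, UVP n]`, then α and β
are fused Markov equivalent. -/
theorem statement9 (n : ℕ) (hn : 2 ≤ n)
    (ι : UVB n →* Equiv.Perm (Fin n)) (hι : IsIota n ι)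
    (s : Equiv.Perm (Fin n) →* UVB n) (hs : IsPermSection n s)
    (α β : UVB n) (hα : α ∈ ι.ker) (hβ : β ∈ ι.ker)
    (π : Equiv.Perm (Fin n))
    (h : s π * α * (s π)⁻¹ * β⁻¹ ∈ ⁅ι.ker, ι.ker⁆) :
    Markov ⟨n, α⟩ ⟨n, β⟩ := by
  have hK : ι.ker ≤ UVB.lamSubgroup n := UVB.ker_le_lamSubgroup hι hs
  have hins : s π * α * (s π)⁻¹ * β⁻¹ ∈ UVB.markovInsertable (UVB.lamSubgroup n) :=
    UVB.commutator_lamSubgroup_le_markovInsertable n (Subgroup.commutator_mono hK hK h)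
  have hβ' : Markov ⟨n, s π * α * (s π)⁻¹⟩ ⟨n, β⟩ := by
    simpa only [inv_mul_cancel_right] using hins.2 β (hK hβ)
  exact (Markov.conj α (s π)).trans hβ'
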